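/- Let d ≥ 2, λ > 0, η ≥ 0, and let L be even. Then for every i ∈ T_L^d, μ^{+,per}_{L;λ,η}( φ_i > V^{−1}( (2d/λ) log L ) ) ≤ L^{−2d}, where V^{−1}(y) = inf{x ≥ 0 : V(x) ≥ y}. -/

import Mathlib

open MeasureTheory Filter
open scoped Classical



/-- Nearest-neighbour adjacency on the torus `T_L^d = (ℤ/Lℤ)^d`. -/
def torusAdj (d L : ℕ) (i j : Fin d → ZMod L) : Prop :=
  ∃ k : Fin d, j = Function.update i k (i k + 1) ∨ j = Function.update i k (i k - 1)

/-- The periodic Hamiltonian `H^{per}_{L;λ}(φ)`. -/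
noncomputable def HamPer (d L : ℕ) [NeZero L] (lam : ℝ) (V : ℝ → ℝ)
    (ψ : (Fin d → ZMod L) → ℝ) : ℝ :=
  (1 / (8 * d)) * ∑ i, ∑ j, (if torusAdj d L i j then (ψ i - ψ j) ^ 2 else 0)
    + lam * ∑ i, V (ψ i)

/-- The a priori measure `∏_{i ∈ T_L^d} (dφ_i + η δ₀(dφ_i))` on the torus. -/
noncomputable def priorPer (d L : ℕ) [NeZero L] (η : ℝ) : Measure ((Fin d → ZMod L) → ℝ) :=
  Measure.pi fun _ => (volume + ENNReal.ofReal η • Measure.dirac (0 : ℝ))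

/-- Density `e^{-H^{per}_{L;λ}(φ)} 𝟙_{Ω₊}(φ)`. -/
noncomputable def densPer (d L : ℕ) [NeZero L] (lam : ℝ) (V : ℝ → ℝ)
    (φ : (Fin d → ZMod L) → ℝ) : ℝ :=
  if ∀ i, 0 ≤ φ i then Real.exp (-(HamPer d L lam V φ)) else 0

/-- The unnormalized Gibbs measure with hard wall, periodic boundary condition. -/
noncomputable def gibbsPer (d L : ℕ) [NeZero L] (lam η : ℝ) (V : ℝ → ℝ) :
    Measure ((Fin d → ZMod L) → ℝ) :=
  (priorPer d L η).withDensity fun φ => ENNReal.ofReal (densPer d L lam V φ)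

/-- The partition function `Z^{+,per}_{L;λ,η}`. -/
noncomputable def ZplusPer (d L : ℕ) [NeZero L] (lam η : ℝ) (V : ℝ → ℝ) : ℝ :=
  (gibbsPer d L lam η V Set.univ).toReal

/-- The restricted partition function `Z^{+,per}_{L;λ,η}[A]`. -/
noncomputable def ZplusPerIn (d L : ℕ) [NeZero L] (lam η : ℝ) (V : ℝ → ℝ)
    (A : Set ((Fin d → ZMod L) → ℝ)) : ℝ :=
  (gibbsPer d L lam η V A).toReal

/-- The normalized Gibbs measure `μ^{+,per}_{L;λ,η}`. -/
noncomputable def muPer (d L : ℕ) [NeZero L] (lam η : ℝ) (V : ℝ → ℝ) :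
    Measure ((Fin d → ZMod L) → ℝ) :=
  (gibbsPer d L lam η V Set.univ)⁻¹ • gibbsPer d L lam η V

/-- The periodic finite-volume free energy `f^{per}_L(λ,η)`. -/
noncomputable def freeEnergyPer (d L : ℕ) [NeZero L] (lam η : ℝ) (V : ℝ → ℝ) : ℝ :=
  ((L : ℝ) ^ d)⁻¹ * Real.log (ZplusPer d L lam η V / ZplusPer d L lam 0 V)

/-- The generalized inverse `V⁻¹(y) = inf {x ≥ 0 : V(x) ≥ y}`. -/
noncomputable def Vinv (V : ℝ → ℝ) (y : ℝ) : ℝ :=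
  sInf {x : ℝ | 0 ≤ x ∧ y ≤ V x}



/-! ### Reflections of the discrete torus -/

/-- The set that agrees with `A` on the half `P` and is symmetric under `θ`. -/
noncomputable def symmetrize {T : Type*} [Fintype T] (θ : T → T) (P : T → Prop)
    (A : Finset T) : Finset T :=
  Finset.univ.filter fun y => if P y then y ∈ A else θ y ∈ A

lemma mem_symmetrize {T : Type*} [Fintype T] {θ : T → T} {P : T → Prop} {A : Finset T} {y : T} :
    y ∈ symmetrize θ P A ↔ if P y then y ∈ A else θ y ∈ A := by
  simp [symmetrize]

lemma card_symmetrize_add {T : Type*} [Fintype T] {θ : T → T} (hθ : Function.Involutive θ)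
    (P : T → Prop) (A : Finset T) :
    (symmetrize θ P A).card + (symmetrize θ (fun x => ¬ P x) A).card = 2 * A.card := by
  have key : ∀ B : Finset T, B.card = ∑ y, if y ∈ B then 1 else 0 := by
    intro B; simp
  have hsum : ∑ y, (if θ y ∈ A then 1 else 0) = ∑ y, if y ∈ A then 1 else 0 :=
    Equiv.sum_comp hθ.toPerm fun y => if y ∈ A then 1 else 0
  rw [key, key (symmetrize θ (fun x => ¬ P x) A), ← Finset.sum_add_distrib, two_mul]
  nth_rewrite 2 [key A]
  rw [key A, ← hsum]
  nth_rewrite 1 [hsum]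
  rw [← Finset.sum_add_distrib]
  refine Finset.sum_congr rfl fun y _ => ?_
  simp only [mem_symmetrize]
  by_cases hP : P y <;> simp [hP, add_comm]

/-- Reflection in direction `k` exchanging `a` and `a - 1`. -/
def torusReflect {d L : ℕ} (k : Fin d) (a : ZMod L) (x : Fin d → ZMod L) : Fin d → ZMod L :=
  Function.update x k (2 * a - 1 - x k)

/-- The half torus `a ≤ x_k < a + m`. -/
def torusHalf {d L : ℕ} (m : ℕ) (k : Fin d) (a : ZMod L) (x : Fin d → ZMod L) : Prop :=
  (x k - a).val < m

lemma torusReflect_involutive {d L : ℕ} (k : Fin d) (a : ZMod L) :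
    Function.Involutive (torusReflect (d := d) k a) := by
  intro x
  simp [torusReflect]

lemma zmod_val_neg_one_sub {L : ℕ} [NeZero L] (t : ZMod L) : (-1 - t).val = L - 1 - t.val := by
  have ht := ZMod.val_lt t
  have h : (-1 - t : ZMod L) = ((L - 1 - t.val : ℕ) : ZMod L) := by
    rw [Nat.sub_sub, Nat.cast_sub (by omega)]
    simp
    ring
  rw [h, ZMod.val_cast_of_lt (by omega)]

lemma zmod_val_add_one {L : ℕ} [NeZero L] (t : ZMod L) :
    (t + 1).val = if t.val + 1 = L then 0 else t.val + 1 := by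
  have ht := ZMod.val_lt t
  have h : (t + 1 : ZMod L) = ((t.val + 1 : ℕ) : ZMod L) := by simp
  split_ifs with hh
  · rw [h, hh]; simp
  · rw [h, ZMod.val_cast_of_lt (by omega)]

lemma torusReflect_sub {d L : ℕ} (k : Fin d) (a : ZMod L) (x : Fin d → ZMod L) :
    torusReflect k a x k - a = -1 - (x k - a) := by
  simp [torusReflect]; ring

lemma torusHalf_reflect {d L m : ℕ} [NeZero L] (hL : L = 2 * m) (k : Fin d) (a : ZMod L)
    (x : Fin d → ZMod L) : torusHalf m k a (torusReflect k a x) ↔ ¬ torusHalf m k a x := by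
  have := ZMod.val_lt (x k - a)
  rw [torusHalf, torusHalf, torusReflect_sub, zmod_val_neg_one_sub]
  omega

lemma torusAdj_reflect_of {d L : ℕ} (k : Fin d) (a : ZMod L) {x y : Fin d → ZMod L}
    (h : torusAdj d L x y) : torusAdj d L (torusReflect k a x) (torusReflect k a y) := by
  obtain ⟨l, rfl | rfl⟩ := h
  all_goals
    by_cases hl : l = k
    · subst hl
      refine ⟨l, ?_⟩
      first
        | exact Or.inr (by simp only [torusReflect, Function.update_self,
            Function.update_idem]; congr 1; ring1)
        | exact Or.inl (by simp only [torusReflect, Function.update_self,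
            Function.update_idem]; congr 1; ring1)
    · refine ⟨l, ?_⟩
      first
        | exact Or.inl (by
            simp only [torusReflect, Function.update_of_ne hl, Function.update_of_ne (Ne.symm hl)]
            exact Function.update_comm hl _ _ _)
        | exact Or.inr (by
            simp only [torusReflect, Function.update_of_ne hl, Function.update_of_ne (Ne.symm hl)]
            exact Function.update_comm hl _ _ _)

lemma torusAdj_reflect {d L : ℕ} (k : Fin d) (a : ZMod L) (x y : Fin d → ZMod L) :
    torusAdj d L (torusReflect k a x) (torusReflect k a y) ↔ torusAdj d L x y := by
  refine ⟨fun h => ?_, torusAdj_reflect_of k a⟩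
  have := torusAdj_reflect_of k a h
  rwa [torusReflect_involutive k a x, torusReflect_involutive k a y] at this

/-- An edge crossing the reflection plane joins a site to its mirror image. -/
lemma eq_torusReflect_of_adj {d L m : ℕ} [NeZero L] (hL : L = 2 * m) (k : Fin d) (a : ZMod L)
    {x y : Fin d → ZMod L} (hx : torusHalf m k a x) (hy : ¬ torusHalf m k a y)
    (h : torusAdj d L x y) : y = torusReflect k a x := by
  have hlt := ZMod.val_lt (x k - a)
  obtain ⟨l, hyx⟩ := h
  have hl : l = k := by
    by_contra hl
    apply hy
    have : y k = x k := by
      rcases hyx with rfl | rfl <;> simp [Function.update_of_ne (Ne.symm hl)]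
    rwa [torusHalf, this]
  subst hl
  rw [torusHalf] at hx hy
  have key : ∀ z : ZMod L, (z - a).val = (-1 - (x l - a)).val →
      Function.update x l z = torusReflect l a x := by
    intro z hz
    have := ZMod.val_injective L hz
    rw [torusReflect]
    congr 1
    linear_combination this
  rcases hyx with rfl | rfl
  · apply key
    simp only [Function.update_self] at hy
    rw [zmod_val_neg_one_sub]
    have e : x l + 1 - a = (x l - a) + 1 := by ring
    rw [e, zmod_val_add_one] at hy ⊢
    split_ifs at hy ⊢ <;> omega
  · apply key
    simp only [Function.update_self] at hy
    rw [zmod_val_neg_one_sub]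
    have e : x l - a = (x l - 1 - a) + 1 := by ring
    have h1 := zmod_val_add_one (x l - 1 - a)
    rw [← e] at h1
    have := ZMod.val_lt (x l - 1 - a)
    split_ifs at h1 <;> omega

/-! ### The chessboard argument -/

lemma exists_run_mem {d L m : ℕ} [NeZero L] (hL : L = 2 * m) {M : Set (Finset (Fin d → ZMod L))}
    (hM : ∀ A ∈ M, ∀ k a, symmetrize (torusReflect k a) (torusHalf m k a) A ∈ M)
    (S : Finset (Fin d)) (k : Fin d)
    (h : ∃ A ∈ M, ∃ x : Fin d → ZMod L, ∀ y, (∀ j ∉ S, y j = x j) → y ∈ A) (n : ℕ) :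
    n < L → ∃ A ∈ M, ∃ x : Fin d → ZMod L,
      ∀ y, (∀ j ∉ insert k S, y j = x j) → (y k - x k).val < n + 1 → y ∈ A := by
  induction n with
  | zero =>
    intro _
    obtain ⟨A, hA, x, hx⟩ := h
    refine ⟨A, hA, x, fun y hy hk => hx y fun j hj => ?_⟩
    by_cases hjk : j = k
    · subst hjk
      have : (y j - x j).val = 0 := by omega
      rw [ZMod.val_eq_zero] at this
      exact sub_eq_zero.1 this
    · exact hy j (by simp [hjk, hj])
  | succ n ih =>
    intro hn
    obtain ⟨A, hA, x, hx⟩ := ih (by omega)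
    refine ⟨_, hM A hA k (x k), Function.update x k (x k - 1), fun y hy hk => ?_⟩
    have hy' : ∀ j ∉ insert k S, y j = x j := by
      intro j hj
      rw [hy j hj, Function.update_of_ne]
      rintro rfl
      simp at hj
    rw [Function.update_self, show y k - (x k - 1) = (y k - x k) + 1 by ring,
      zmod_val_add_one] at hk
    have hlt := ZMod.val_lt (y k - x k)
    rw [mem_symmetrize]
    split_ifs with hP
    · rw [torusHalf] at hP
      refine hx y hy' ?_
      split_ifs at hk <;> omega
    · rw [torusHalf] at hP
      refine hx _ (fun j hj => ?_) ?_
      · rw [torusReflect, Function.update_of_ne, hy' j hj]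
        rintro rfl
        simp at hj
      · rw [torusReflect_sub, zmod_val_neg_one_sub]
        split_ifs at hk <;> omega

/-- A family of sets stable under all symmetrizations contains the whole torus as soon as it has a
nonempty member. -/
lemma univ_mem_of_symmetrize_mem {d L m : ℕ} [NeZero L] (hL : L = 2 * m)
    {M : Set (Finset (Fin d → ZMod L))}
    (hM : ∀ A ∈ M, ∀ k a, symmetrize (torusReflect k a) (torusHalf m k a) A ∈ M)
    {A : Finset (Fin d → ZMod L)} (hA : A ∈ M) (hne : A.Nonempty) : Finset.univ ∈ M := by
  have main : ∀ S : Finset (Fin d),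
      ∃ A ∈ M, ∃ x : Fin d → ZMod L, ∀ y, (∀ j ∉ S, y j = x j) → y ∈ A := by
    intro S
    induction S using Finset.induction_on with
    | empty =>
      obtain ⟨x, hx⟩ := hne
      refine ⟨A, hA, x, fun y hy => ?_⟩
      rwa [show y = x from funext fun j => hy j (by simp)]
    | insert k S _ ih =>
      have hpos : 0 < L := Nat.pos_of_ne_zero (NeZero.ne L)
      obtain ⟨B, hB, x, hx⟩ := exists_run_mem hL hM S k ih (L - 1) (by omega)
      refine ⟨B, hB, x, fun y hy => hx y hy ?_⟩
      have := ZMod.val_lt (y k - x k)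
      omega
  obtain ⟨B, hB, x, hx⟩ := main Finset.univ
  rwa [show Finset.univ = B from (Finset.eq_univ_of_forall fun y => hx y (by simp)).symm]

/-- Chessboard estimate for set functions satisfying the Cauchy-Schwarz inequality for all
reflections. -/
lemma chessboard_estimate {d L m : ℕ} [NeZero L] (hL : L = 2 * m)
    {Φ : Finset (Fin d → ZMod L) → ℝ} (h0 : ∀ A, 0 ≤ Φ A)
    (hRP : ∀ A k a, Φ A ^ 2 ≤ Φ (symmetrize (torusReflect k a) (torusHalf m k a) A) *
      Φ (symmetrize (torusReflect k a) (fun x => ¬ torusHalf m k a x) A))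
    {c : ℝ} (hc : 0 < c)
    (huniv : Φ Finset.univ ≤ c ^ (Finset.univ : Finset (Fin d → ZMod L)).card * Φ ∅)
    (A : Finset (Fin d → ZMod L)) : Φ A ≤ c ^ A.card * Φ ∅ := by
  set F : Finset (Fin d → ZMod L) → ℝ := fun A => Φ A / c ^ A.card with hF
  have hF0 : ∀ A, 0 ≤ F A := fun A => div_nonneg (h0 A) (by positivity)
  obtain ⟨B, hB⟩ := Finite.exists_max F
  suffices h : F B ≤ Φ ∅ by
    have := (hB A).trans h
    rwa [hF, div_le_iff₀ (by positivity), mul_comm] at this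
  by_contra! hlt
  have hBpos : 0 < F B := (h0 ∅).trans_lt hlt
  have hstep : ∀ A ∈ {A | F A = F B}, ∀ k a,
      symmetrize (torusReflect k a) (torusHalf m k a) A ∈ {A | F A = F B} := by
    intro A hA k a
    refine le_antisymm (hB _) ?_
    have hsq : F A ^ 2 ≤ F (symmetrize (torusReflect k a) (torusHalf m k a) A) *
        F (symmetrize (torusReflect k a) (fun x => ¬ torusHalf m k a x) A) := by
      simp only [hF]
      rw [div_mul_div_comm, ← pow_add, card_symmetrize_add (torusReflect_involutive k a),
        div_pow, ← pow_mul, mul_comm A.card]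
      exact div_le_div_of_nonneg_right (hRP A k a) (by positivity)
    rw [show F A = F B from hA, sq] at hsq
    exact le_of_mul_le_mul_right
      (hsq.trans (mul_le_mul_of_nonneg_left (hB _) (hF0 _))) hBpos
  have hBne : B.Nonempty := by
    rw [Finset.nonempty_iff_ne_empty]
    rintro rfl
    simp [hF] at hlt
  have hu : F Finset.univ = F B :=
    univ_mem_of_symmetrize_mem hL (M := {A | F A = F B}) hstep rfl hBne
  rw [← hu, hF, lt_div_iff₀ (by positivity)] at hlt
  linarith

/-! ### Reflection positivity -/

lemma lintegral_mul_sq_le {α : Type*} [MeasurableSpace α] (μ : Measure α) {f g : α → ENNReal}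
    (hf : Measurable f) (hg : Measurable g) :
    (∫⁻ x, f x * g x ∂μ) ^ 2 ≤ (∫⁻ x, f x * f x ∂μ) * ∫⁻ x, g x * g x ∂μ := by
  have h := ENNReal.lintegral_mul_le_Lp_mul_Lq μ Real.HolderConjugate.two_two
    hf.aemeasurable hg.aemeasurable
  have hs : ∀ y : ENNReal, (y ^ (1 / 2 : ℝ)) ^ 2 = y := by
    intro y
    rw [← ENNReal.rpow_natCast, ← ENNReal.rpow_mul]
    norm_num
  have h2 := pow_le_pow_left' h 2
  rw [mul_pow, hs, hs] at h2
  simpa [sq] using h2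

/-- The Gaussian kernel is a superposition of rank-one kernels. -/
lemma ofReal_exp_neg_mul_sq_eq_lintegral {c : ℝ} (hc : 0 < c) (a b : ℝ) :
    ENNReal.ofReal (Real.exp (-c * (a - b) ^ 2)) =
      ∫⁻ t, ENNReal.ofReal (Real.exp (-(2 * c) * (a - t) ^ 2)) *
        ENNReal.ofReal (Real.exp (-(2 * c) * (b - t) ^ 2))
        ∂(ENNReal.ofReal (√(Real.pi / (4 * c)))⁻¹ • (volume : Measure ℝ)) := by
  have hs : 0 < √(Real.pi / (4 * c)) := Real.sqrt_pos.2 (by positivity)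
  have e : ∀ t : ℝ, ENNReal.ofReal (Real.exp (-(2 * c) * (a - t) ^ 2)) *
      ENNReal.ofReal (Real.exp (-(2 * c) * (b - t) ^ 2)) =
      ENNReal.ofReal (Real.exp (-c * (a - b) ^ 2)) *
        ENNReal.ofReal (Real.exp (-(4 * c) * (t - (a + b) / 2) ^ 2)) := by
    intro t
    rw [← ENNReal.ofReal_mul (Real.exp_nonneg _), ← ENNReal.ofReal_mul (Real.exp_nonneg _),
      ← Real.exp_add, ← Real.exp_add]
    congr 2
    ring
  have hI : ∫⁻ t : ℝ, ENNReal.ofReal (Real.exp (-(4 * c) * (t - (a + b) / 2) ^ 2)) =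
      ENNReal.ofReal (√(Real.pi / (4 * c))) := by
    rw [lintegral_sub_right_eq_self
      (fun t : ℝ => ENNReal.ofReal (Real.exp (-(4 * c) * t ^ 2))) ((a + b) / 2),
      ← ofReal_integral_eq_lintegral_ofReal (integrable_exp_neg_mul_sq (by positivity))
      (Eventually.of_forall fun _ => Real.exp_nonneg _), integral_gaussian]
  rw [lintegral_smul_measure]
  simp_rw [e]
  rw [lintegral_const_mul' _ _ ENNReal.ofReal_ne_top, hI, smul_eq_mul, mul_left_comm,
    ← ENNReal.ofReal_mul (by positivity), inv_mul_cancel₀ hs.ne', ENNReal.ofReal_one, mul_one]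

lemma exists_prod_gaussian_eq_lintegral {ι : Type*} {c : ℝ} (hc : 0 < c) (S : Finset ι) :
    ∃ (Ω : Type) (_ : MeasurableSpace Ω) (τ : Measure Ω) (_ : SFinite τ)
      (g : (ι → ℝ) → Ω → ENNReal), Measurable (Function.uncurry g) ∧
      ∀ u v : ι → ℝ, ∏ x ∈ S, ENNReal.ofReal (Real.exp (-c * (u x - v x) ^ 2)) =
        ∫⁻ t, g u t * g v t ∂τ := by
  induction S using Finset.induction_on with
  | empty =>
    refine ⟨Unit, inferInstance, Measure.dirac (), inferInstance, fun _ _ => 1,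
      measurable_const, fun u v => ?_⟩
    simp
  | insert x S hx ih =>
    obtain ⟨Ω, _, τ, _, g, hg, hS⟩ := ih
    refine ⟨Ω × ℝ, inferInstance,
      τ.prod (ENNReal.ofReal (√(Real.pi / (4 * c)))⁻¹ • (volume : Measure ℝ)), inferInstance,
      fun u t => g u t.1 * ENNReal.ofReal (Real.exp (-(2 * c) * (u x - t.2) ^ 2)), ?_,
      fun u v => ?_⟩
    · have h1 : Measurable fun p : (ι → ℝ) × Ω × ℝ => g p.1 p.2.1 :=
        hg.comp (measurable_fst.prodMk (measurable_fst.comp measurable_snd))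
      exact h1.mul (by fun_prop)
    · have hgm : ∀ w, Measurable (g w) := fun w => hg.comp (measurable_const.prodMk measurable_id)
      rw [Finset.prod_insert hx, hS, ofReal_exp_neg_mul_sq_eq_lintegral hc, mul_comm,
        ← lintegral_prod_mul ((hgm u).fun_mul (hgm v)).aemeasurable (by fun_prop)]
      refine lintegral_congr fun t => ?_
      ring

/-- Cauchy-Schwarz inequality for a product of Gaussian couplings. -/
lemma lintegral_gaussian_coupling_sq_le {ι : Type*} [Fintype ι] (μ : Measure (ι → ℝ)) [SFinite μ]
    {c : ℝ} (hc : 0 < c) (S : Finset ι) {F G : (ι → ℝ) → ENNReal}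
    (hF : Measurable F) (hG : Measurable G) :
    (∫⁻ u, ∫⁻ v, F u * G v * ∏ x ∈ S, ENNReal.ofReal (Real.exp (-c * (u x - v x) ^ 2)) ∂μ ∂μ) ^ 2 ≤
      (∫⁻ u, ∫⁻ v, F u * F v *
        ∏ x ∈ S, ENNReal.ofReal (Real.exp (-c * (u x - v x) ^ 2)) ∂μ ∂μ) *
      ∫⁻ u, ∫⁻ v, G u * G v *
        ∏ x ∈ S, ENNReal.ofReal (Real.exp (-c * (u x - v x) ^ 2)) ∂μ ∂μ := by
  obtain ⟨Ω, _, τ, _, g, hg, hS⟩ := exists_prod_gaussian_eq_lintegral hc S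
  have hgu : ∀ u, Measurable (g u) := fun w => hg.comp (measurable_const.prodMk measurable_id)
  have hgt : ∀ t, Measurable fun u => g u t := fun t =>
    hg.comp (measurable_id.prodMk measurable_const)
  have hm : ∀ {H : (ι → ℝ) → ENNReal}, Measurable H →
      Measurable fun p : (ι → ℝ) × Ω => H p.1 * g p.1 p.2 := fun hH =>
    (hH.comp measurable_fst).mul hg
  have hmi : ∀ {H : (ι → ℝ) → ENNReal}, Measurable H →
      Measurable fun t => ∫⁻ u, H u * g u t ∂μ := fun hH =>
    Measurable.lintegral_prod_left' (hm hH)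
  have key : ∀ {F G : (ι → ℝ) → ENNReal}, Measurable F → Measurable G →
      ∫⁻ u, ∫⁻ v, F u * G v * ∏ x ∈ S, ENNReal.ofReal (Real.exp (-c * (u x - v x) ^ 2)) ∂μ ∂μ =
      ∫⁻ t, (∫⁻ u, F u * g u t ∂μ) * (∫⁻ v, G v * g v t ∂μ) ∂τ := by
    intro F G hF hG
    have h1 : ∀ u, ∫⁻ v, F u * G v *
        ∏ x ∈ S, ENNReal.ofReal (Real.exp (-c * (u x - v x) ^ 2)) ∂μ =
        ∫⁻ t, (F u * g u t) * ∫⁻ v, G v * g v t ∂μ ∂τ := by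
      intro u
      have : ∀ v, F u * G v * ∏ x ∈ S, ENNReal.ofReal (Real.exp (-c * (u x - v x) ^ 2)) =
          ∫⁻ t, (F u * g u t) * (G v * g v t) ∂τ := by
        intro v
        rw [hS, ← lintegral_const_mul _ ((hgu u).fun_mul (hgu v))]
        refine lintegral_congr fun t => ?_
        ring
      simp_rw [this]
      rw [lintegral_lintegral_swap]
      · refine lintegral_congr fun t => ?_
        rw [lintegral_const_mul _ (hG.fun_mul (hgt t))]
      · exact ((((hgu u).comp measurable_snd).const_mul (F u)).mul (hm hG)).aemeasurable
    simp_rw [h1]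
    rw [lintegral_lintegral_swap]
    · refine lintegral_congr fun t => ?_
      rw [lintegral_mul_const _ (hF.fun_mul (hgt t))]
    · exact ((hm hF).mul ((hmi hG).comp measurable_snd)).aemeasurable
  rw [key hF hG, key hF hF, key hG hG]
  exact lintegral_mul_sq_le τ (hmi hF) (hmi hG)

section Fold

variable {T : Type*} {θ : T → T} {P : T → Prop}

/-- A set with an involution exchanging `P` and its complement is two copies of `P`. -/
noncomputable def foldEquiv (hθ : Function.Involutive θ) (hP : ∀ x, P (θ x) ↔ ¬ P x) :
    {x // P x} ⊕ {x // P x} ≃ T where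
  toFun := Sum.elim (fun x => x.1) (fun x => θ x.1)
  invFun y := if h : P y then Sum.inl ⟨y, h⟩ else Sum.inr ⟨θ y, (hP y).2 h⟩
  left_inv := by
    rintro (x | x)
    · simp [x.2]
    · simp [hP, x.2, hθ x.1]
  right_inv y := by
    by_cases h : P y
    · simp [h]
    · simp [h, hθ y]

@[simp] lemma foldEquiv_inl (hθ : Function.Involutive θ) (hP : ∀ x, P (θ x) ↔ ¬ P x)
    (x : {x // P x}) : foldEquiv hθ hP (Sum.inl x) = x.1 := rfl

@[simp] lemma foldEquiv_inr (hθ : Function.Involutive θ) (hP : ∀ x, P (θ x) ↔ ¬ P x)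
    (x : {x // P x}) : foldEquiv hθ hP (Sum.inr x) = θ x.1 := rfl

/-- The configuration equal to `u` on the half `P` and to the reflection of `v` elsewhere. -/
noncomputable def glue (hθ : Function.Involutive θ) (hP : ∀ x, P (θ x) ↔ ¬ P x)
    (u v : {x // P x} → ℝ) (y : T) : ℝ :=
  Sum.elim u v ((foldEquiv hθ hP).symm y)

@[simp] lemma glue_coe (hθ : Function.Involutive θ) (hP : ∀ x, P (θ x) ↔ ¬ P x)
    (u v : {x // P x} → ℝ) (x : {x // P x}) : glue hθ hP u v x.1 = u x := by
  rw [glue, ← foldEquiv_inl hθ hP, Equiv.symm_apply_apply, Sum.elim_inl]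

@[simp] lemma glue_reflect (hθ : Function.Involutive θ) (hP : ∀ x, P (θ x) ↔ ¬ P x)
    (u v : {x // P x} → ℝ) (x : {x // P x}) : glue hθ hP u v (θ x.1) = v x := by
  rw [glue, ← foldEquiv_inr hθ hP, Equiv.symm_apply_apply, Sum.elim_inr]

variable [Fintype T]

lemma sum_fold {M : Type*} [AddCommMonoid M] (hθ : Function.Involutive θ)
    (hP : ∀ x, P (θ x) ↔ ¬ P x) (f : T → M) :
    ∑ y, f y = ∑ x : {x // P x}, f x.1 + ∑ x : {x // P x}, f (θ x.1) := by
  rw [← (foldEquiv hθ hP).sum_comp f, Fintype.sum_sum_type]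
  rfl

lemma prod_fold {M : Type*} [CommMonoid M] (hθ : Function.Involutive θ)
    (hP : ∀ x, P (θ x) ↔ ¬ P x) (f : T → M) :
    ∏ y, f y = (∏ x : {x // P x}, f x.1) * ∏ x : {x // P x}, f (θ x.1) := by
  rw [← (foldEquiv hθ hP).prod_comp f, Fintype.prod_sum_type]
  rfl

lemma lintegral_pi_fold (hθ : Function.Involutive θ) (hP : ∀ x, P (θ x) ↔ ¬ P x)
    (ν : Measure ℝ) [SigmaFinite ν] {f : (T → ℝ) → ENNReal} (hf : Measurable f) :
    ∫⁻ φ, f φ ∂(Measure.pi fun _ : T => ν) =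
      ∫⁻ u, ∫⁻ v, f (glue hθ hP u v) ∂(Measure.pi fun _ : {x // P x} => ν)
        ∂(Measure.pi fun _ : {x // P x} => ν) := by
  have h1 := (measurePreserving_sumPiEquivProdPi_symm
    (fun _ : {x // P x} ⊕ {x // P x} => ν)).trans
    (measurePreserving_piCongrLeft (fun _ : T => ν) (foldEquiv hθ hP))
  have hglue : ∀ u v, ((MeasurableEquiv.sumPiEquivProdPi
      (fun _ : {x // P x} ⊕ {x // P x} => ℝ)).symm.trans
      (MeasurableEquiv.piCongrLeft (fun _ : T => ℝ) (foldEquiv hθ hP))) (u, v) =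
      glue hθ hP u v := by
    intro u v
    funext y
    obtain ⟨z, rfl⟩ := (foldEquiv hθ hP).surjective y
    rw [glue, Equiv.symm_apply_apply, MeasurableEquiv.trans_apply,
      MeasurableEquiv.piCongrLeft_apply_apply]
    rcases z with z | z <;> rfl
  rw [← h1.lintegral_comp hf, lintegral_prod _ (hf.fun_comp h1.measurable).aemeasurable]
  simp_rw [hglue]

/-- The product of `χ (φ y)` over the sites satisfying `Q`. -/
noncomputable def siteProd {ι : Type*} [Fintype ι] (χ : ℝ → ENNReal) (Q : ι → Prop)
    (φ : ι → ℝ) : ENNReal :=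
  ∏ y, if Q y then χ (φ y) else 1

lemma measurable_siteProd {ι : Type*} [Fintype ι] {χ : ℝ → ENNReal} (hχ : Measurable χ)
    (Q : ι → Prop) : Measurable (siteProd χ Q) := by
  refine Finset.measurable_fun_prod _ fun y _ => ?_
  split_ifs
  · exact hχ.comp (measurable_pi_apply y)
  · exact measurable_const

lemma siteProd_glue (hθ : Function.Involutive θ) (hP : ∀ x, P (θ x) ↔ ¬ P x)
    (χ : ℝ → ENNReal) (Q : T → Prop) (u v : {x // P x} → ℝ) :
    siteProd χ Q (glue hθ hP u v) =
      siteProd χ (fun x : {x // P x} => Q x.1) u *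
        siteProd χ (fun x : {x // P x} => Q (θ x.1)) v := by
  simp only [siteProd]
  rw [prod_fold hθ hP]
  simp only [glue_coe, glue_reflect]

/-- Reflection positivity: a density that splits into mirror factors and Gaussian couplings across
the reflection plane satisfies the Cauchy-Schwarz inequality for one-site insertions. -/
lemma reflection_cauchy_schwarz (hθ : Function.Involutive θ) (hP : ∀ x, P (θ x) ↔ ¬ P x)
    (ν : Measure ℝ) [SigmaFinite ν] {c : ℝ} (hc : 0 < c) {W : (T → ℝ) → ENNReal}
    (hW : Measurable W) {χ : ℝ → ENNReal} (hχ : Measurable χ)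
    {G : ({x // P x} → ℝ) → ENNReal} (hG : Measurable G) (S : Finset {x // P x})
    (hWG : ∀ u v, W (glue hθ hP u v) =
      G u * G v * ∏ x ∈ S, ENNReal.ofReal (Real.exp (-c * (u x - v x) ^ 2)))
    (A : Finset T) :
    (∫⁻ φ, W φ * siteProd χ (· ∈ A) φ ∂(Measure.pi fun _ : T => ν)) ^ 2 ≤
      (∫⁻ φ, W φ * siteProd χ (· ∈ symmetrize θ P A) φ ∂(Measure.pi fun _ : T => ν)) *
      ∫⁻ φ, W φ * siteProd χ (· ∈ symmetrize θ (fun x => ¬ P x) A) φ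
        ∂(Measure.pi fun _ : T => ν) := by
  have key : ∀ B : Finset T,
      ∫⁻ φ, W φ * siteProd χ (· ∈ B) φ ∂(Measure.pi fun _ : T => ν) =
      ∫⁻ u, ∫⁻ v, (G u * siteProd χ (fun x : {x // P x} => x.1 ∈ B) u) *
        (G v * siteProd χ (fun x : {x // P x} => θ x.1 ∈ B) v) *
        ∏ x ∈ S, ENNReal.ofReal (Real.exp (-c * (u x - v x) ^ 2))
        ∂(Measure.pi fun _ : {x // P x} => ν) ∂(Measure.pi fun _ : {x // P x} => ν) := by
    intro B
    rw [lintegral_pi_fold hθ hP ν (hW.fun_mul (measurable_siteProd hχ (· ∈ B)))]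
    refine lintegral_congr fun u => lintegral_congr fun v => ?_
    rw [hWG, siteProd_glue hθ hP]
    ring
  have e1 : (fun x : {x // P x} => x.1 ∈ symmetrize θ P A) = fun x => x.1 ∈ A := by
    funext x; simp [mem_symmetrize, x.2]
  have e2 : (fun x : {x // P x} => θ x.1 ∈ symmetrize θ P A) = fun x => x.1 ∈ A := by
    funext x; simp [mem_symmetrize, x.2, hP, hθ x.1]
  have e3 : (fun x : {x // P x} => x.1 ∈ symmetrize θ (fun x => ¬ P x) A) =
      fun x => θ x.1 ∈ A := by
    funext x; simp [mem_symmetrize, x.2]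
  have e4 : (fun x : {x // P x} => θ x.1 ∈ symmetrize θ (fun x => ¬ P x) A) =
      fun x => θ x.1 ∈ A := by
    funext x; simp [mem_symmetrize, x.2, hP]
  rw [key, key (symmetrize θ P A), key (symmetrize θ (fun x => ¬ P x) A), e1, e2, e3, e4]
  have hF₁ : Measurable fun u => G u * siteProd χ (fun x : {x // P x} => x.1 ∈ A) u :=
    hG.fun_mul (measurable_siteProd hχ _)
  have hF₂ : Measurable fun v => G v * siteProd χ (fun x : {x // P x} => θ x.1 ∈ A) v :=
    hG.fun_mul (measurable_siteProd hχ _)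
  exact lintegral_gaussian_coupling_sq_le (Measure.pi fun _ : {x // P x} => ν) hc S hF₁ hF₂

end Fold

/-! ### The Gibbs density -/

lemma HamPer_glue {d L m : ℕ} [NeZero L] (hL : L = 2 * m) (lam : ℝ) (V : ℝ → ℝ)
    (k : Fin d) (a : ZMod L) (u v : {x : Fin d → ZMod L // torusHalf m k a x} → ℝ) :
    HamPer d L lam V (glue (torusReflect_involutive k a) (torusHalf_reflect hL k a) u v) =
      ((1 / (8 * d)) * ∑ x, ∑ y, (if torusAdj d L x.1 y.1 then (u x - u y) ^ 2 else 0)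
        + lam * ∑ x, V (u x)) +
      ((1 / (8 * d)) * ∑ x, ∑ y, (if torusAdj d L x.1 y.1 then (v x - v y) ^ 2 else 0)
        + lam * ∑ x, V (v x)) +
      ∑ x with torusAdj d L x.1 (torusReflect k a x.1), (1 / (4 * d)) * (u x - v x) ^ 2 := by
  obtain ⟨C, hC⟩ : ∃ C : {x : Fin d → ZMod L // torusHalf m k a x} → Prop,
      ∀ x, C x ↔ torusAdj d L x.1 (torusReflect k a x.1) := ⟨_, fun _ => Iff.rfl⟩
  have hcross : ∀ x y : {x : Fin d → ZMod L // torusHalf m k a x},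
      torusAdj d L x.1 (torusReflect k a y.1) ↔
        x = y ∧ C x := by
    intro x y
    constructor
    · intro h
      have hy : ¬ torusHalf m k a (torusReflect k a y.1) := by
        rw [torusHalf_reflect hL]; exact not_not.2 y.2
      have := eq_torusReflect_of_adj hL k a x.2 hy h
      have hxy : x = y := Subtype.ext ((torusReflect_involutive k a).injective this).symm
      subst hxy
      exact ⟨rfl, (hC x).2 h⟩
    · rintro ⟨rfl, h⟩
      exact (hC x).1 h
  have hcross' : ∀ x y : {x : Fin d → ZMod L // torusHalf m k a x},
      torusAdj d L (torusReflect k a x.1) y.1 ↔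
        x = y ∧ C x := by
    intro x y
    rw [← hcross]
    conv_lhs => rw [← torusAdj_reflect k a, torusReflect_involutive k a]
  rw [HamPer, sum_fold (torusReflect_involutive k a) (torusHalf_reflect hL k a),
    sum_fold (torusReflect_involutive k a) (torusHalf_reflect hL k a) fun y => V _]
  simp only [sum_fold (torusReflect_involutive k a) (torusHalf_reflect hL k a), glue_coe,
    glue_reflect, torusAdj_reflect, hcross, hcross', ite_and, Finset.sum_add_distrib,
    Finset.sum_ite_eq, Finset.mem_univ, if_true, ← Finset.mul_sum, Finset.sum_filter]
  have hsq : (∑ x, if C x then (v x - u x) ^ 2 else 0) =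
      ∑ x, if C x then (u x - v x) ^ 2 else 0 :=
    Finset.sum_congr rfl fun x _ => by rw [sub_sq_comm]
  rw [hsq]
  by_cases hd : (d : ℝ) = 0
  · simp [hd]; ring
  · field_simp
    ring

lemma continuous_HamPer (d L : ℕ) [NeZero L] (lam : ℝ) {V : ℝ → ℝ} (hV : Continuous V) :
    Continuous (HamPer d L lam V) := by
  unfold HamPer
  refine (continuous_const.mul ?_).add (continuous_const.mul ?_)
  · refine continuous_finsetSum _ fun i _ => continuous_finsetSum _ fun j _ => ?_
    split_ifs <;> fun_prop
  · exact continuous_finsetSum _ fun i _ => by fun_prop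

lemma sigmaFinite_volume_add_dirac (η : ℝ) :
    SigmaFinite ((volume : Measure ℝ) + ENNReal.ofReal η • Measure.dirac 0) := by
  have : IsFiniteMeasure (ENNReal.ofReal η • Measure.dirac (0 : ℝ)) :=
    Measure.smul_finite _ ENNReal.ofReal_ne_top
  infer_instance

lemma measurableSet_forall_nonneg (ι : Type*) [Finite ι] :
    MeasurableSet {φ : ι → ℝ | ∀ i, 0 ≤ φ i} := by
  have := Fintype.ofFinite ι
  rw [Set.ofPred_forall]
  exact MeasurableSet.iInter fun i => measurableSet_le measurable_const (measurable_pi_apply i)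

lemma measurable_densPer (d L : ℕ) [NeZero L] (lam : ℝ) {V : ℝ → ℝ} (hV : Continuous V) :
    Measurable (densPer d L lam V) :=
  Measurable.ite (measurableSet_forall_nonneg _)
    (Real.continuous_exp.comp (continuous_HamPer d L lam hV).neg).measurable measurable_const

/-- Cauchy-Schwarz inequality for the periodic Gibbs measure with respect to reflections. -/
lemma densPer_cauchy_schwarz {d L m : ℕ} [NeZero L] (hd : 0 < d) (hL : L = 2 * m) (lam η : ℝ)
    {V : ℝ → ℝ} (hV : Continuous V) {χ : ℝ → ENNReal} (hχ : Measurable χ)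
    (A : Finset (Fin d → ZMod L)) (k : Fin d) (a : ZMod L) :
    (∫⁻ φ, ENNReal.ofReal (densPer d L lam V φ) * siteProd χ (· ∈ A) φ ∂(priorPer d L η)) ^ 2 ≤
      (∫⁻ φ, ENNReal.ofReal (densPer d L lam V φ) *
        siteProd χ (· ∈ symmetrize (torusReflect k a) (torusHalf m k a) A) φ ∂(priorPer d L η)) *
      ∫⁻ φ, ENNReal.ofReal (densPer d L lam V φ) *
        siteProd χ (· ∈ symmetrize (torusReflect k a) (fun x => ¬ torusHalf m k a x) A) φ
        ∂(priorPer d L η) := by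
  set E : ({x : Fin d → ZMod L // torusHalf m k a x} → ℝ) → ℝ := fun u =>
    (1 / (8 * d)) * ∑ x, ∑ y, (if torusAdj d L x.1 y.1 then (u x - u y) ^ 2 else 0)
        + lam * ∑ x, V (u x) with hE
  have hEc : Continuous E := by
    refine (continuous_const.mul ?_).add (continuous_const.mul ?_)
    · refine continuous_finsetSum _ fun i _ => continuous_finsetSum _ fun j _ => ?_
      split_ifs <;> fun_prop
    · exact continuous_finsetSum _ fun i _ => by fun_prop
  have hGm : Measurable fun u => ENNReal.ofReal (if ∀ x, 0 ≤ u x then Real.exp (-E u) else 0) :=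
    (Measurable.ite (measurableSet_forall_nonneg _)
      (Real.continuous_exp.comp hEc.neg).measurable measurable_const).ennreal_ofReal
  have := sigmaFinite_volume_add_dirac η
  refine reflection_cauchy_schwarz (torusReflect_involutive k a) (torusHalf_reflect hL k a)
    (volume + ENNReal.ofReal η • Measure.dirac (0 : ℝ)) (c := 1 / (4 * d)) (by positivity)
    (measurable_densPer d L lam hV).ennreal_ofReal hχ hGm
    (Finset.univ.filter fun x => torusAdj d L x.1 (torusReflect k a x.1)) (fun u v => ?_) A
  rw [densPer, HamPer_glue hL]
  have hnn : (∀ i, 0 ≤ glue (torusReflect_involutive k a) (torusHalf_reflect hL k a) u v i) ↔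
      (∀ x, 0 ≤ u x) ∧ ∀ x, 0 ≤ v x := by
    rw [← (foldEquiv (torusReflect_involutive k a) (torusHalf_reflect hL k a)).forall_congr_right,
      Sum.forall]
    simp
  simp only [hnn]
  by_cases hu : ∀ x, 0 ≤ u x
  · by_cases hv : ∀ x, 0 ≤ v x
    · rw [if_pos ⟨hu, hv⟩, if_pos hu, if_pos hv,
        ← ENNReal.ofReal_prod_of_nonneg fun _ _ => Real.exp_nonneg _,
        ← ENNReal.ofReal_mul (Real.exp_nonneg _), ← ENNReal.ofReal_mul (by positivity),
        ← Real.exp_sum, ← Real.exp_add, ← Real.exp_add]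
      congr 2
      simp only [hE, neg_mul, Finset.sum_neg_distrib]
      ring
    · rw [if_neg fun h => hv h.2, if_neg hv, ENNReal.ofReal_zero, mul_zero, zero_mul]
  · rw [if_neg fun h => hu h.1, if_neg hu, ENNReal.ofReal_zero, zero_mul, zero_mul]

/-! ### Convex potentials -/

lemma ConvexOn.add_le_map_add {V : ℝ → ℝ} (hV : ConvexOn ℝ Set.univ V) (hV0 : V 0 = 0)
    {a b : ℝ} (ha : 0 ≤ a) (hb : 0 ≤ b) : V a + V b ≤ V (a + b) := by
  rcases (add_nonneg ha hb).eq_or_lt with h | h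
  · have h1 : a = 0 := by linarith
    have h2 : b = 0 := by linarith
    simp [h1, h2, hV0]
  · have key : ∀ x y, 0 ≤ x → 0 ≤ y → x + y = a + b → V x ≤ x / (a + b) * V (a + b) := by
      intro x y hx hy hxy
      have := hV.2 (Set.mem_univ (a + b)) (Set.mem_univ 0)
        (show 0 ≤ x / (a + b) by positivity) (show 0 ≤ y / (a + b) by positivity)
        (by rw [← add_div, hxy, div_self h.ne'])
      simpa [hV0, div_mul_cancel₀ _ h.ne'] using this
    have h1 := key a b ha hb rfl
    have h2 := key b a hb ha (add_comm _ _)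
    calc V a + V b ≤ a / (a + b) * V (a + b) + b / (a + b) * V (a + b) := add_le_add h1 h2
      _ = V (a + b) := by field_simp

lemma ConvexOn.nonneg_of_even {V : ℝ → ℝ} (hV : ConvexOn ℝ Set.univ V)
    (hVeven : ∀ x, V (-x) = V x) (hV0 : V 0 = 0) (x : ℝ) : 0 ≤ V x := by
  have := hV.2 (Set.mem_univ x) (Set.mem_univ (-x))
    (show (0 : ℝ) ≤ 1 / 2 by norm_num) (show (0 : ℝ) ≤ 1 / 2 by norm_num) (by norm_num)
  simp only [smul_eq_mul, hVeven] at this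
  rw [show (1 / 2 * x + 1 / 2 * -x : ℝ) = 0 by ring, hV0] at this
  linarith

lemma Vinv_spec {V : ℝ → ℝ} (hVc : Continuous V) (hVeven : ∀ x, V (-x) = V x)
    (hV : ConvexOn ℝ Set.univ V) (hVne : V ≠ 0) (hV0 : V 0 = 0) (y : ℝ) :
    0 ≤ Vinv V y ∧ y ≤ V (Vinv V y) := by
  obtain ⟨x, hx0, hx⟩ : ∃ x, 0 ≤ x ∧ 0 < V x := by
    obtain ⟨x, hx⟩ := Function.ne_iff.1 hVne
    have hpos : 0 < V x := lt_of_le_of_ne (hV.nonneg_of_even hVeven hV0 x) (Ne.symm hx)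
    refine ⟨|x|, abs_nonneg x, ?_⟩
    rcases abs_choice x with h | h <;> rw [h]
    · exact hpos
    · rwa [hVeven]
  have hmul : ∀ n : ℕ, n * V x ≤ V (n * x) := by
    intro n
    induction n with
    | zero => simp [hV0]
    | succ n ih =>
      have := hV.add_le_map_add hV0 (mul_nonneg n.cast_nonneg hx0) hx0
      push_cast
      rw [add_mul, add_mul, one_mul, one_mul]
      linarith
  obtain ⟨n, hn⟩ := exists_nat_ge (y / V x)
  have hne : {x : ℝ | 0 ≤ x ∧ y ≤ V x}.Nonempty :=
    ⟨n * x, by positivity, ((div_le_iff₀ hx).1 hn).trans (hmul n)⟩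
  have hcl : IsClosed {x : ℝ | 0 ≤ x ∧ y ≤ V x} :=
    isClosed_Ici.inter (isClosed_le continuous_const hVc)
  exact hcl.csInf_mem hne ⟨0, fun z hz => hz.1⟩

/-! ### Raising the whole field -/

lemma densPer_add_const_le {d L : ℕ} [NeZero L] {lam : ℝ} (hlam : 0 ≤ lam) {V : ℝ → ℝ}
    (hV : ConvexOn ℝ Set.univ V) (hV0 : V 0 = 0) {h : ℝ} (hh : 0 ≤ h)
    {φ : (Fin d → ZMod L) → ℝ} (hφ : ∀ i, 0 ≤ φ i) :
    densPer d L lam V (φ + fun _ => h) ≤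
      Real.exp (-lam * V h) ^ (Finset.univ : Finset (Fin d → ZMod L)).card *
        densPer d L lam V φ := by
  have hφ' : ∀ i, 0 ≤ (φ + fun _ : Fin d → ZMod L => h) i := fun i => add_nonneg (hφ i) hh
  rw [densPer, densPer, if_pos hφ, if_pos hφ', ← Real.exp_nat_mul, ← Real.exp_add,
    Real.exp_le_exp]
  have hsum : ∑ i, V (φ i) + (Finset.univ : Finset (Fin d → ZMod L)).card * V h ≤
      ∑ i, V (φ i + h) := by
    rw [← nsmul_eq_mul, ← Finset.sum_const, ← Finset.sum_add_distrib]
    exact Finset.sum_le_sum fun i _ => hV.add_le_map_add hV0 (hφ i) hh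
  have := mul_le_mul_of_nonneg_left hsum hlam
  simp only [HamPer, Pi.add_apply, add_sub_add_right_eq_sub]
  linarith

lemma restrict_priorPer (d L : ℕ) [NeZero L] (η : ℝ) {h : ℝ} (hh : 0 ≤ h) :
    (priorPer d L η).restrict (Set.univ.pi fun _ => Set.Ioi h) =
      (volume : Measure ((Fin d → ZMod L) → ℝ)).restrict (Set.univ.pi fun _ => Set.Ioi h) := by
  have := sigmaFinite_volume_add_dirac η
  rw [priorPer, volume_pi, Measure.restrict_pi_pi, Measure.restrict_pi_pi]
  congr 1
  funext _
  rw [Measure.restrict_add, Measure.restrict_smul, restrict_dirac' measurableSet_Ioi,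
    if_neg (by simpa using hh), smul_zero, add_zero]

lemma siteProd_indicator_univ {ι : Type*} [Fintype ι] (h : ℝ) (φ : ι → ℝ) :
    siteProd ((Set.Ioi h).indicator 1) (· ∈ (Finset.univ : Finset ι)) φ =
      (Set.univ.pi fun _ => Set.Ioi h).indicator 1 φ := by
  by_cases hφ : φ ∈ Set.univ.pi fun _ => Set.Ioi h
  · rw [Set.indicator_of_mem hφ, siteProd]
    refine Finset.prod_eq_one fun y _ => ?_
    rw [if_pos (Finset.mem_univ y), Set.indicator_of_mem (hφ y trivial)]
    rfl
  · rw [Set.indicator_of_notMem hφ, siteProd]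
    obtain ⟨y, hy⟩ : ∃ y, φ y ∉ Set.Ioi h := by
      simpa [Set.mem_univ_pi] using hφ
    refine Finset.prod_eq_zero (Finset.mem_univ y) ?_
    rw [if_pos (Finset.mem_univ y), Set.indicator_of_notMem hy]

lemma lintegral_densPer_univ_le {d L : ℕ} [NeZero L] {lam : ℝ} (hlam : 0 ≤ lam) (η : ℝ)
    {V : ℝ → ℝ} (hVc : Continuous V) (hV : ConvexOn ℝ Set.univ V) (hV0 : V 0 = 0)
    {h : ℝ} (hh : 0 ≤ h) :
    ∫⁻ φ, ENNReal.ofReal (densPer d L lam V φ) *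
        siteProd ((Set.Ioi h).indicator 1) (· ∈ (Finset.univ : Finset (Fin d → ZMod L))) φ
        ∂(priorPer d L η) ≤
      ENNReal.ofReal
          (Real.exp (-lam * V h) ^ (Finset.univ : Finset (Fin d → ZMod L)).card) *
        ∫⁻ φ, ENNReal.ofReal (densPer d L lam V φ) ∂(priorPer d L η) := by
  have hms : ∀ h : ℝ, MeasurableSet
      (Set.univ.pi fun _ => Set.Ioi h : Set ((Fin d → ZMod L) → ℝ)) := fun h =>
    MeasurableSet.univ_pi fun _ => measurableSet_Ioi
  have hWm := (measurable_densPer d L lam hVc).ennreal_ofReal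
  set C := Real.exp (-lam * V h) ^ (Finset.univ : Finset (Fin d → ZMod L)).card
  calc _ = ∫⁻ φ in (Set.univ.pi fun _ => Set.Ioi h),
        ENNReal.ofReal (densPer d L lam V φ) ∂(priorPer d L η) := by
        rw [← lintegral_indicator (hms h)]
        refine lintegral_congr fun φ => ?_
        rw [siteProd_indicator_univ]
        by_cases hφ : φ ∈ Set.univ.pi fun _ => Set.Ioi h
        · simp only [Set.indicator_of_mem hφ, Pi.one_apply, mul_one]
        · simp only [Set.indicator_of_notMem hφ, mul_zero]
    _ = ∫⁻ φ, (Set.univ.pi fun _ => Set.Ioi h).indicator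
          (fun φ => ENNReal.ofReal (densPer d L lam V φ)) (φ + fun _ => h) := by
        rw [restrict_priorPer d L η hh, ← lintegral_indicator (hms h),
          lintegral_add_right_eq_self]
    _ ≤ ∫⁻ φ, (Set.univ.pi fun _ => Set.Ioi 0).indicator
          (fun φ => ENNReal.ofReal C * ENNReal.ofReal (densPer d L lam V φ)) φ := by
        refine lintegral_mono fun φ => ?_
        by_cases hφ : φ ∈ Set.univ.pi fun _ => Set.Ioi 0
        · rw [Set.indicator_of_mem hφ, ← ENNReal.ofReal_mul (by positivity)]
          exact (Set.indicator_le_self _ _ _).trans (ENNReal.ofReal_le_ofReal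
            (densPer_add_const_le hlam hV hV0 hh fun i => (hφ i trivial).le))
        · have hφ' : φ + (fun _ => h) ∉ Set.univ.pi fun _ => Set.Ioi h := by
            simpa [Set.mem_univ_pi] using hφ
          rw [Set.indicator_of_notMem hφ']
          exact zero_le
    _ = ENNReal.ofReal C * ∫⁻ φ in (Set.univ.pi fun _ => Set.Ioi 0),
          ENNReal.ofReal (densPer d L lam V φ) ∂(priorPer d L η) := by
        rw [lintegral_indicator (hms 0), restrict_priorPer d L η le_rfl,
          lintegral_const_mul _ hWm]
    _ ≤ _ := mul_le_mul_right (setLIntegral_le_lintegral _ _) _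

lemma siteProd_empty {ι : Type*} [Fintype ι] (χ : ℝ → ENNReal) (φ : ι → ℝ) :
    siteProd χ (· ∈ (∅ : Finset ι)) φ = 1 := by
  simp [siteProd]

lemma siteProd_singleton {ι : Type*} [Fintype ι] (χ : ℝ → ENNReal) (i : ι) (φ : ι → ℝ) :
    siteProd χ (· ∈ ({i} : Finset ι)) φ = χ (φ i) := by
  simp [siteProd]

lemma siteProd_le_one {ι : Type*} [Fintype ι] {χ : ℝ → ENNReal} (hχ : ∀ t, χ t ≤ 1)
    (Q : ι → Prop) (φ : ι → ℝ) : siteProd χ Q φ ≤ 1 :=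
  Finset.prod_le_one' fun y _ => by split_ifs <;> simp [hχ]

/-- The unnormalized one-site bound. -/
lemma gibbsPer_one_site_le {d L m : ℕ} [NeZero L] (hd : 0 < d) (hL : L = 2 * m) {lam : ℝ}
    (hlam : 0 ≤ lam) (η : ℝ) {V : ℝ → ℝ} (hVc : Continuous V) (hV : ConvexOn ℝ Set.univ V)
    (hV0 : V 0 = 0) {h : ℝ} (hh : 0 ≤ h) (hfin : gibbsPer d L lam η V Set.univ ≠ ⊤)
    (i : Fin d → ZMod L) :
    (gibbsPer d L lam η V {φ | h < φ i}).toReal ≤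
      Real.exp (-lam * V h) * (gibbsPer d L lam η V Set.univ).toReal := by
  set χ : ℝ → ENNReal := (Set.Ioi h).indicator 1 with hχdef
  have hχ : Measurable χ := measurable_one.indicator measurableSet_Ioi
  have hχ1 : ∀ t, χ t ≤ 1 := fun t => Set.indicator_le_self _ _ t
  set Ψ : Finset (Fin d → ZMod L) → ENNReal := fun A =>
    ∫⁻ φ, ENNReal.ofReal (densPer d L lam V φ) * siteProd χ (· ∈ A) φ ∂(priorPer d L η) with hΨ
  have hΨ0 : Ψ ∅ = gibbsPer d L lam η V Set.univ := by
    simp only [hΨ, siteProd_empty, mul_one]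
    rw [gibbsPer, withDensity_apply _ MeasurableSet.univ, Measure.restrict_univ]
  have hΨi : Ψ {i} = gibbsPer d L lam η V {φ | h < φ i} := by
    have hs : MeasurableSet {φ : (Fin d → ZMod L) → ℝ | h < φ i} :=
      measurableSet_lt measurable_const (measurable_pi_apply i)
    simp only [hΨ, siteProd_singleton]
    rw [gibbsPer, withDensity_apply _ hs, ← lintegral_indicator hs]
    refine lintegral_congr fun φ => ?_
    by_cases hφ : h < φ i
    · rw [Set.indicator_of_mem (show φ ∈ {φ | h < φ i} from hφ), hχdef,
        Set.indicator_of_mem (show φ i ∈ Set.Ioi h from hφ), Pi.one_apply, mul_one]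
    · rw [Set.indicator_of_notMem (show φ ∉ {φ | h < φ i} from hφ), hχdef,
        Set.indicator_of_notMem (show φ i ∉ Set.Ioi h from hφ), mul_zero]
  have hΨle : ∀ A, Ψ A ≤ Ψ ∅ := fun A => lintegral_mono fun φ => by
    rw [siteProd_empty]
    exact mul_le_mul_right (siteProd_le_one hχ1 _ φ) _
  have hΨtop : ∀ A, Ψ A ≠ ⊤ := fun A => ne_top_of_le_ne_top (hΨ0 ▸ hfin) (hΨle A)
  have hmain := chessboard_estimate (d := d) hL (Φ := fun A => (Ψ A).toReal)
    (fun _ => ENNReal.toReal_nonneg)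
    (fun A k a => by
      rw [← ENNReal.toReal_pow, ← ENNReal.toReal_mul]
      exact ENNReal.toReal_mono (ENNReal.mul_ne_top (hΨtop _) (hΨtop _))
        (densPer_cauchy_schwarz hd hL lam η hVc hχ A k a))
    (Real.exp_pos (-lam * V h))
    (by
      have := lintegral_densPer_univ_le (d := d) (L := L) hlam η hVc hV hV0 hh
      have h2 : Ψ Finset.univ ≤ ENNReal.ofReal
          (Real.exp (-lam * V h) ^ (Finset.univ : Finset (Fin d → ZMod L)).card) * Ψ ∅ := by
        simpa only [hΨ, siteProd_empty, mul_one] using this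
      have h3 := ENNReal.toReal_mono (ENNReal.mul_ne_top ENNReal.ofReal_ne_top (hΨtop ∅)) h2
      rwa [ENNReal.toReal_mul, ENNReal.toReal_ofReal (by positivity)] at h3)
    {i}
  rwa [Finset.card_singleton, pow_one, hΨ0, hΨi] at hmain

/-- Chessboard one-site estimate: for `d ≥ 2`, `λ > 0`, `η ≥ 0` and `L` even, for every
`i ∈ T_L^d`, `μ^{+,per}_{L;λ,η}(φ_i > V^{-1}((2d/λ) log L)) ≤ L^{-2d}`. -/
theorem muPer_one_site_large_height
    (d : ℕ) (hd : 2 ≤ d)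
    (V : ℝ → ℝ) (hVeven : ∀ x, V (-x) = V x) (hVconvex : ConvexOn ℝ Set.univ V)
    (hVne : V ≠ 0) (hV0 : V 0 = 0)
    (lam : ℝ) (hlam : 0 < lam) (η : ℝ) (hη : 0 ≤ η)
    (L : ℕ) (hL : 0 < L) (hLeven : Even L) :
    ∀ i : Fin d → ZMod L,
      (@muPer d L ⟨hL.ne'⟩ lam η V
          {φ | Vinv V (2 * d / lam * Real.log L) < φ i}).toReal ≤
        ((L : ℝ) ^ (2 * d))⁻¹ := by
  intro i
  have : NeZero L := ⟨hL.ne'⟩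
  obtain ⟨m, hm⟩ := hLeven
  have hVc : Continuous V := by
    rw [← continuousOn_univ]
    exact hVconvex.continuousOn isOpen_univ
  obtain ⟨hh, hVh⟩ := Vinv_spec hVc hVeven hVconvex hVne hV0 (2 * d / lam * Real.log L)
  set h := Vinv V (2 * d / lam * Real.log L)
  have hexp : Real.exp (-lam * V h) ≤ ((L : ℝ) ^ (2 * d))⁻¹ := by
    have hLpos : (0 : ℝ) < L := by exact_mod_cast hL
    rw [← Real.exp_log (pow_pos hLpos (2 * d)), ← Real.exp_neg, Real.exp_le_exp, Real.log_pow]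
    have := mul_le_mul_of_nonneg_left hVh hlam.le
    have e : lam * (2 * d / lam * Real.log L) = 2 * d * Real.log L := by field_simp
    push_cast
    linarith
  rw [muPer, Measure.smul_apply, smul_eq_mul, ENNReal.toReal_mul, ENNReal.toReal_inv]
  by_cases hfin : gibbsPer d L lam η V Set.univ = ⊤
  · rw [hfin, ENNReal.toReal_top, inv_zero, zero_mul]
    positivity
  have hmain := gibbsPer_one_site_le (by omega : 0 < d) (by omega : L = 2 * m) hlam.le η hVc
    hVconvex hV0 hh hfin i
  rw [inv_mul_eq_div]
  refine (div_le_of_le_mul₀ ENNReal.toReal_nonneg (Real.exp_nonneg _) hmain).trans hexp
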